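/- arXiv:math/0502437 — 2 statements merged into one kernel-verified Lean document; each statement's English description precedes it below -/
import Mathlib

section
/- Let n be a natural number and let W be an affine subspace of ℝ^n. Suppose W contains a point all of whose coordinates are nonnegative but contains no point all of whose coordinates are strictly positive. Then for every real number t and every w ∈ W, the scalar multiple t·w does not have all coordinates strictly positive; that is, the set of all scalar multiples of points of W is disjoint from the open positive orthant. -/
/-!
Let `C` be stable under positive scalars and under translation by a point `x₀` of `W`, and suppose
that `t • w ∈ C` with `w ∈ W`. If `0 < t`, rescaling puts `w` itself in `C`. If `t ≤ 0`, the affine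
combination `(1 - t) • x₀ + t • w` is a point of `W`, and it lies in `C` because `0 ≤ 1 - t`.
-/

section Cone

variable {𝕜 E : Type*} [DivisionRing 𝕜] [LinearOrder 𝕜] [IsStrictOrderedRing 𝕜]
  [AddCommGroup E] [Module 𝕜 E] {C : Set E} {t : 𝕜} {x₀ y w : E}

lemma mem_of_pos_smul_mem (hC : ∀ c : 𝕜, 0 < c → ∀ x ∈ C, c • x ∈ C) (ht : 0 < t)
    (hw : t • w ∈ C) : w ∈ C := by
  simpa only [inv_smul_smul₀ ht.ne'] using hC t⁻¹ (inv_pos.2 ht) _ hw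

lemma nonneg_smul_add_mem (hC : ∀ c : 𝕜, 0 < c → ∀ x ∈ C, c • x ∈ C)
    (hx₀ : ∀ x ∈ C, x₀ + x ∈ C) (ht : 0 ≤ t) (hy : y ∈ C) : t • x₀ + y ∈ C := by
  rcases ht.eq_or_lt with rfl | ht
  · simpa only [zero_smul, zero_add] using hy
  · have hscaled : x₀ + t⁻¹ • y ∈ C := hx₀ _ (hC _ (inv_pos.2 ht) y hy)
    simpa only [smul_add, smul_inv_smul₀ ht.ne'] using hC t ht _ hscaled

lemma lineMap_mem_of_smul_mem (hC : ∀ c : 𝕜, 0 < c → ∀ x ∈ C, c • x ∈ C)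
    (hx₀ : ∀ x ∈ C, x₀ + x ∈ C) (ht : t ≤ 1) (hw : t • w ∈ C) :
    AffineMap.lineMap x₀ w t ∈ C := by
  rw [AffineMap.lineMap_apply_module]
  exact nonneg_smul_add_mem hC hx₀ (sub_nonneg.2 ht) hw

theorem stmt_2_general {W : AffineSubspace 𝕜 E} (hC : ∀ c : 𝕜, 0 < c → ∀ x ∈ C, c • x ∈ C)
    (hx₀W : x₀ ∈ W) (hx₀ : ∀ x ∈ C, x₀ + x ∈ C) (hW : ∀ x ∈ W, x ∉ C) :
    ∀ t : 𝕜, ∀ w ∈ W, t • w ∉ C := by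
  intro t w hw htw
  rcases lt_or_ge 0 t with ht | ht
  · exact hW w hw (mem_of_pos_smul_mem hC ht htw)
  · exact hW _ (AffineMap.lineMap_mem t hx₀W hw)
      (lineMap_mem_of_smul_mem hC hx₀ (ht.trans zero_le_one) htw)

end Cone

/-- First step of Claim 3 of Theorem 3.1: if an affine subspace `W` of `ℝ^n` contains
a nonnegative point but no strictly positive point, then the set of all scalar
multiples of points of `W` misses the open positive orthant. -/
theorem stmt_2 (n : ℕ) (W : AffineSubspace ℝ (Fin n → ℝ))
    (x₀ : Fin n → ℝ) (hx₀ : x₀ ∈ W) (hx₀nn : ∀ i, 0 ≤ x₀ i)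
    (hW : ∀ x ∈ W, ¬ ∀ i, 0 < x i) :
    ∀ (t : ℝ), ∀ w ∈ W, ¬ ∀ i, 0 < (t • w) i :=
  stmt_2_general (C := {x : Fin n → ℝ | ∀ i, 0 < x i})
    (fun _ hc _ hx i ↦ mul_pos hc (hx i)) hx₀
    (fun _ hx i ↦ add_pos_of_nonneg_of_pos (hx₀nn i) (hx i)) hW
end

section
/- Let n ≥ 1 be a natural number and let U be a linear subspace of ℝ^n containing no vector all of whose coordinates are strictly positive. Then there exists a linear subspace V of ℝ^n of dimension n−1 such that U ⊆ V and V contains no vector all of whose coordinates are strictly positive. -/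
/-!
The open positive orthant is convex and open, so Hahn–Banach separates it from `U` by a
continuous linear functional. That functional is bounded below on `U`, hence vanishes there, since
a nonzero value could be scaled to any real number; its kernel is the required hyperplane.
-/

section OrderedField

variable {K E : Type*} [Field K] [LinearOrder K] [IsStrictOrderedRing K]
  [AddCommGroup E] [Module K E]

theorem le_ker_of_forall_mem_le {f : Module.Dual K E} {U : Submodule K E} {c : K}
    (hc : ∀ x ∈ U, c ≤ f x) : U ≤ LinearMap.ker f := by
  intro x hx
  rw [LinearMap.mem_ker]
  by_contra hfx
  have hle : c ≤ c - 1 := by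
    simpa [div_mul_cancel₀ _ hfx] using hc (((c - 1) / f x) • x) (U.smul_mem _ hx)
  linarith

end OrderedField

theorem finrank_quotient_ker_of_ne_zero {K E : Type*} [Field K] [AddCommGroup E] [Module K E]
    {f : Module.Dual K E} (hf : f ≠ 0) : Module.finrank K (E ⧸ LinearMap.ker f) = 1 :=
  (f.quotKerEquivOfSurjective (LinearMap.surjective hf)).finrank_eq.trans (Module.finrank_self K)

section HahnBanach

variable {E : Type*} [AddCommGroup E] [Module ℝ E] [TopologicalSpace E]
  [IsTopologicalAddGroup E] [ContinuousSMul ℝ E] {s : Set E} {U : Submodule ℝ E}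

theorem exists_strongDual_le_ker_forall_mem_neg (hs : Convex ℝ s) (hso : IsOpen s)
    (hsU : Disjoint s (U : Set E)) :
    ∃ f : StrongDual ℝ E, U ≤ LinearMap.ker (f : E →ₗ[ℝ] ℝ) ∧ ∀ x ∈ s, f x < 0 := by
  obtain ⟨f, c, hfs, hfU⟩ := geometric_hahn_banach_open hs hso U.convex hsU
  have hc : c ≤ 0 := by simpa using hfU 0 U.zero_mem
  exact ⟨f, le_ker_of_forall_mem_le hfU, fun x hx ↦ (hfs x hx).trans_le hc⟩

theorem stmt_3_general (hs : Convex ℝ s) (hso : IsOpen s) (hne : s.Nonempty)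
    (hsU : Disjoint s (U : Set E)) :
    ∃ V : Submodule ℝ E, Module.finrank ℝ (E ⧸ V) = 1 ∧ IsClosed (V : Set E) ∧ U ≤ V ∧
      Disjoint s (V : Set E) := by
  obtain ⟨f, hfU, hfs⟩ := exists_strongDual_le_ker_forall_mem_neg hs hso hsU
  obtain ⟨a, ha⟩ := hne
  have hf : (f : E →ₗ[ℝ] ℝ) ≠ 0 := fun h ↦ (hfs a ha).ne (LinearMap.congr_fun h a)
  exact ⟨LinearMap.ker (f : E →ₗ[ℝ] ℝ), finrank_quotient_ker_of_ne_zero hf, f.isClosed_ker, hfU,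
    Set.disjoint_left.2 fun x hx ↦ (hfs x hx).ne⟩

end HahnBanach

/-- The open positive orthant of `ℝ^ι`, written as a product of open half-lines so that convexity
and openness are inherited from the factors. -/
def posOrthant (ι : Type*) : Set (ι → ℝ) := Set.univ.pi fun _ ↦ Set.Ioi 0

section PosOrthant

variable (ι : Type*)

theorem convex_posOrthant : Convex ℝ (posOrthant ι) :=
  convex_pi fun _ _ ↦ convex_Ioi 0

theorem isOpen_posOrthant [Finite ι] : IsOpen (posOrthant ι) :=
  isOpen_set_pi Set.finite_univ fun _ _ ↦ isOpen_Ioi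

theorem posOrthant_nonempty : (posOrthant ι).Nonempty :=
  Set.univ_pi_nonempty_iff.2 fun _ ↦ Set.nonempty_Ioi

variable {ι}

theorem disjoint_posOrthant_iff {W : Submodule ℝ (ι → ℝ)} :
    Disjoint (posOrthant ι) (W : Set (ι → ℝ)) ↔ ∀ x ∈ W, ¬ ∀ i, 0 < x i := by
  simp only [posOrthant, Set.disjoint_right, SetLike.mem_coe, Set.mem_univ_pi, Set.mem_Ioi]

end PosOrthant

/-- Hyperplane-extension step of Claim 3 of Theorem 3.1: a linear subspace `U` of `ℝ^n`
missing the open positive orthant extends to a hyperplane (an `(n-1)`-dimensional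
subspace) still missing the open positive orthant. -/
theorem stmt_3 (n : ℕ) (hn : 1 ≤ n) (U : Submodule ℝ (Fin n → ℝ))
    (hU : ∀ x ∈ U, ¬ ∀ i, 0 < x i) :
    ∃ V : Submodule ℝ (Fin n → ℝ),
      Module.finrank ℝ V = n - 1 ∧ U ≤ V ∧ ∀ x ∈ V, ¬ ∀ i, 0 < x i := by
  obtain ⟨V, hV, -, hUV, hVpos⟩ := stmt_3_general (convex_posOrthant _) (isOpen_posOrthant _)
    (posOrthant_nonempty _) (disjoint_posOrthant_iff.2 hU)
  have hdim : 1 + Module.finrank ℝ V = n := by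
    simpa only [hV, Module.finrank_fin_fun] using V.finrank_quotient_add_finrank
  exact ⟨V, by omega, hUV, disjoint_posOrthant_iff.1 hVpos⟩
end
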